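/- Let Q be a quiver with a set ρ of monomial relations, over which cyclic words exist. If w is a cyclic word of minimal length, then every arrow of Q occurs at most once as a direct letter of w and at most once as an inverse letter of w; in particular the length of w is at most 2a, where a is the number of arrows of Q. -/

import Mathlib

/-! We model a quiver by a type `V` of vertices, a finite type `A` of arrows
and source/target maps `src tgt : A → V`.  A letter is an arrow (direct
letter, `Sum.inl`) or a formal inverse of an arrow (inverse letter,
`Sum.inr`); the formal inverse of a letter is given by `Sum.swap`.  A set `ρ`
of monomial relations is a set of composable arrow paths of length at
least 2. -/

/-- Source of a letter. -/
def lsrc {V A : Type*} (src tgt : A → V) : A ⊕ A → V := fun l => l.elim src tgt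

/-- Target of a letter. -/
def ltgt {V A : Type*} (src tgt : A → V) : A ⊕ A → V := fun l => l.elim tgt src

/-- The inverse of a word: reverse the list and invert each letter. -/
def winv {A : Type*} (w : List (A ⊕ A)) : List (A ⊕ A) := (w.map Sum.swap).reverse

/-- `w` is a word: consecutive letters are composable, (W1) no letter is
immediately followed by its inverse, and (W2) no subword of `w` or of `w⁻¹`
belongs to the set `ρ` of monomial relations. -/
def IsWord {V A : Type*} (src tgt : A → V) (ρ : Set (List A))
    (w : List (A ⊕ A)) : Prop :=
  List.Chain' (fun l l' => ltgt src tgt l = lsrc src tgt l') w ∧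
  List.Chain' (fun l l' => Sum.swap l ≠ l') w ∧
  (∀ p ∈ ρ, ¬ (p.map Sum.inl) <:+: w) ∧
  (∀ p ∈ ρ, ¬ (p.map Sum.inl) <:+: winv w)

/-- `w` is a cyclic word: it contains both a direct and an inverse letter,
and `w ++ w` is again a word. -/
def IsCyclicWord {V A : Type*} (src tgt : A → V) (ρ : Set (List A))
    (w : List (A ⊕ A)) : Prop :=
  (∃ l ∈ w, l.isLeft = true) ∧ (∃ l ∈ w, l.isRight = true) ∧
  IsWord src tgt ρ (w ++ w)

/-!
Call direct and inverse letters the two colours. A relation or its inverse is monochromatic, so it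
cannot straddle a change of colour: two words can be joined freely at such a place, and a word
inside a longer one is controlled by its maximal monochromatic runs.

Suppose that a cyclic word repeats a letter, `w = a u a v` up to rotation, and compare the runs of
the colour of `a` at the start of `u a v` and of `v a u`. If the first is a prefix of the second,
then `a u` is cyclic, and in the opposite case `a v` is. Otherwise the two words diverge after `a`
at letters `x ≠ y` with the same source. Read backwards, the same comparison gives a shorter cyclic
word or a divergence before `a`. In the remaining case exchange `u` and `v`, if necessary, so that
`v` contains a letter of the other colour. Then a path `p` across `u a` and a path `q` inside `v`,
each leading from the divergence after `a` to the one before `a`, have parallel and distinct letters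
of the same colour at both ends, so `p q⁻¹` is a shorter cyclic word.
-/

instance instLawfulBEqSum {α β : Type*} [BEq α] [BEq β] [LawfulBEq α] [LawfulBEq β] :
    LawfulBEq (α ⊕ β) where
  rfl {x} := by
    rcases x with a | b
    exacts [beq_self_eq_true a, beq_self_eq_true b]
  eq_of_beq {x y} h := by
    rcases x with a | b <;> rcases y with a' | b'
    · exact congrArg Sum.inl (eq_of_beq (a := a) h)
    · exact absurd h Bool.false_ne_true
    · exact absurd h Bool.false_ne_true
    · exact congrArg Sum.inr (eq_of_beq (a := b) h)

section Lists

variable {α : Type*}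

theorem prefix_or_prefix_or_exists_ne (l l' : List α) :
    l <+: l' ∨ l' <+: l ∨ ∃ m x y, x ≠ y ∧ m ++ [x] <+: l ∧ m ++ [y] <+: l' := by
  induction l generalizing l' with
  | nil => exact .inl l'.nil_prefix
  | cons a l ih =>
    cases l' with
    | nil => exact .inr (.inl (List.nil_prefix))
    | cons b l' =>
      by_cases hab : a = b
      · subst hab
        rcases ih l' with h | h | ⟨m, x, y, hxy, hx, hy⟩
        · exact .inl (by simpa using h)
        · exact .inr (.inl (by simpa using h))
        · exact .inr (.inr ⟨a :: m, x, y, hxy, by simpa using hx, by simpa using hy⟩)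
      · exact .inr (.inr ⟨[], a, b, hab, by simp, by simp⟩)

theorem exists_perm_cons_of_prefix_append {z m r : List α} {x : α} (hz : z ≠ [])
    (h : m ++ [x] <+: z ++ (m ++ r)) : ∃ s, z ++ m = m ++ x :: s ∧ z.Perm (x :: s) := by
  have hlen : (m ++ [x]).length ≤ (z ++ m).length := by
    have := List.length_pos_iff.2 hz
    simp only [List.length_append, List.length_singleton]
    omega
  rw [← List.append_assoc] at h
  obtain ⟨s, hs⟩ := List.prefix_of_prefix_length_le h (List.prefix_append _ _) hlen
  have heq : z ++ m = m ++ x :: s := by simp [← hs]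
  refine ⟨s, heq, (List.perm_append_left_iff m).1 ?_⟩
  rw [← heq]
  exact List.perm_append_comm

theorem exists_prefix_head?_getLast? {l : List α} {a b : α} (hb : b ∈ a :: l) :
    ∃ p, p <+: a :: l ∧ p.head? = some a ∧ p.getLast? = some b := by
  obtain ⟨s, t, hst⟩ := List.append_of_mem hb
  refine ⟨s ++ [b], ⟨t, by simp [hst]⟩, ?_, by simp⟩
  have := congrArg List.head? hst
  cases s <;> simp_all

theorem exists_append_cons_append_cons_of_not_nodup {l : List α} (h : ¬ l.Nodup) :
    ∃ a r s t, l = r ++ a :: s ++ a :: t := by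
  obtain ⟨a, ha⟩ := List.exists_duplicate_iff_not_nodup.2 h
  obtain ⟨l₁, l₂, rfl, h₁, h₂⟩ := List.cons_sublist_iff.1 (List.duplicate_iff_sublist.1 ha)
  obtain ⟨r, s, rfl⟩ := List.append_of_mem h₁
  obtain ⟨s', t, rfl⟩ := List.append_of_mem (List.singleton_sublist.1 h₂)
  exact ⟨a, r, s ++ s', t, by simp⟩

end Lists

section Inverse

variable {V A : Type*} (src tgt : A → V)

@[simp]
theorem lsrc_swap (a : A ⊕ A) : lsrc src tgt a.swap = ltgt src tgt a := by
  cases a <;> rfl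

@[simp]
theorem ltgt_swap (a : A ⊕ A) : ltgt src tgt a.swap = lsrc src tgt a := by
  cases a <;> rfl

@[simp]
theorem winv_winv (w : List (A ⊕ A)) : winv (winv w) = w := by
  simp [winv]

@[simp]
theorem winv_nil : winv ([] : List (A ⊕ A)) = [] := rfl

@[simp]
theorem winv_append (u v : List (A ⊕ A)) : winv (u ++ v) = winv v ++ winv u := by
  simp [winv]

@[simp]
theorem winv_cons (a : A ⊕ A) (w : List (A ⊕ A)) : winv (a :: w) = winv w ++ [a.swap] := by
  simp [winv]

@[simp]
theorem length_winv (w : List (A ⊕ A)) : (winv w).length = w.length := by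
  simp [winv]

@[simp]
theorem mem_winv {a : A ⊕ A} {w : List (A ⊕ A)} : a ∈ winv w ↔ a.swap ∈ w := by
  cases a <;> simp [winv]

@[simp]
theorem head?_winv (w : List (A ⊕ A)) : (winv w).head? = w.getLast?.map Sum.swap := by
  simp [winv]

@[simp]
theorem getLast?_winv (w : List (A ⊕ A)) : (winv w).getLast? = w.head?.map Sum.swap := by
  simp [winv]

theorem exists_mem_winv_isLeft_ne {w : List (A ⊕ A)} {c : Bool} (h : ∃ l ∈ w, l.isLeft ≠ c) :
    ∃ l ∈ winv w, l.isLeft ≠ !c := by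
  obtain ⟨l, hl, hlc⟩ := h
  exact ⟨l.swap, by simpa using hl, by simpa [← Sum.bnot_isLeft] using hlc⟩

theorem winv_infix_iff {z w : List (A ⊕ A)} : winv z <:+: w ↔ z <:+: winv w := by
  constructor <;> intro h
  · simpa [winv] using (List.reverse_infix.2 h).map Sum.swap
  · simpa [winv] using (List.reverse_infix.2 h).map Sum.swap

end Inverse

section Words

variable {V A : Type*} {src tgt : A → V} {ρ : Set (List A)} {u v w : List (A ⊕ A)}

/-- The letter `b` may directly follow the letter `a` in a word: they are composable and not inverse
to each other. This is the condition on pairs of neighbouring letters; (W2) is not part of it. -/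
def CanFollow (src tgt : A → V) (a b : A ⊕ A) : Prop :=
  ltgt src tgt a = lsrc src tgt b ∧ a.swap ≠ b

theorem CanFollow.swap {a b : A ⊕ A} (h : CanFollow src tgt a b) :
    CanFollow src tgt b.swap a.swap :=
  ⟨by simpa using h.1.symm, by simpa using h.2.symm⟩

/-- The relations in `ρ`, read as words, together with their inverses. Condition (W2) says that
these are not subwords. -/
def relators (ρ : Set (List A)) : Set (List (A ⊕ A)) :=
  {z | ∃ p ∈ ρ, z = p.map Sum.inl ∨ z = winv (p.map Sum.inl)}

theorem winv_mem_relators {z : List (A ⊕ A)} (hz : z ∈ relators ρ) : winv z ∈ relators ρ := by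
  obtain ⟨p, hp, rfl | rfl⟩ := hz
  · exact ⟨p, hp, .inr rfl⟩
  · exact ⟨p, hp, .inl (winv_winv _)⟩

theorem isLeft_eq_of_mem_relators {z : List (A ⊕ A)} (hz : z ∈ relators ρ) {a b : A ⊕ A}
    (ha : a ∈ z) (hb : b ∈ z) : a.isLeft = b.isLeft := by
  obtain ⟨p, -, rfl | rfl⟩ := hz <;> cases a <;> cases b <;> simp_all

theorem isWord_iff : IsWord src tgt ρ w ↔
    w.IsChain (CanFollow src tgt) ∧ ∀ z ∈ relators ρ, ¬ z <:+: w := by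
  have hchain : w.IsChain (CanFollow src tgt) ↔
      w.IsChain (fun a b ↦ ltgt src tgt a = lsrc src tgt b) ∧ w.IsChain (fun a b ↦ a.swap ≠ b) := by
    simp only [CanFollow, List.isChain_iff_getElem]
    exact ⟨fun h ↦ ⟨fun i hi ↦ (h i hi).1, fun i hi ↦ (h i hi).2⟩,
      fun h i hi ↦ ⟨h.1 i hi, h.2 i hi⟩⟩
  have hrel : (∀ z ∈ relators ρ, ¬ z <:+: w) ↔
      (∀ p ∈ ρ, ¬ p.map Sum.inl <:+: w) ∧ ∀ p ∈ ρ, ¬ p.map Sum.inl <:+: winv w := by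
    simp only [← winv_infix_iff]
    constructor
    · exact fun h ↦ ⟨fun p hp ↦ h _ ⟨p, hp, .inl rfl⟩, fun p hp ↦ h _ ⟨p, hp, .inr rfl⟩⟩
    · rintro ⟨h₁, h₂⟩ _ ⟨p, hp, rfl | rfl⟩
      exacts [h₁ p hp, h₂ p hp]
  rw [hchain, hrel, and_assoc]
  rfl

theorem IsWord.infix (hw : IsWord src tgt ρ w) (h : u <:+: w) : IsWord src tgt ρ u := by
  rw [isWord_iff] at hw ⊢
  exact ⟨hw.1.infix h, fun z hz hzu ↦ hw.2 z hz (hzu.trans h)⟩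

theorem isWord_winv (hw : IsWord src tgt ρ w) : IsWord src tgt ρ (winv w) := by
  rw [isWord_iff] at hw ⊢
  refine ⟨?_, fun z hz h ↦ hw.2 _ (winv_mem_relators hz) (winv_infix_iff.2 h)⟩
  rw [winv, List.isChain_reverse, List.isChain_map]
  exact hw.1.imp fun _ _ h ↦ h.swap

theorem IsWord.append (hu : IsWord src tgt ρ u) (hv : IsWord src tgt ρ v)
    (h : ∀ a ∈ u.getLast?, ∀ b ∈ v.head?, CanFollow src tgt a b ∧ a.isLeft ≠ b.isLeft) :
    IsWord src tgt ρ (u ++ v) := by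
  rw [isWord_iff] at hu hv ⊢
  refine ⟨List.isChain_append.2 ⟨hu.1, hv.1, fun a ha b hb ↦ (h a ha b hb).1⟩, fun z hz hzuv ↦ ?_⟩
  rcases List.infix_append_iff_ne_nil.1 hzuv with hzu | hzv | ⟨s, t, hs, ht, rfl, hsu, htv⟩
  · exact hu.2 z hz hzu
  · exact hv.2 z hz hzv
  · obtain ⟨a, ha⟩ := Option.ne_none_iff_exists'.1 (mt List.getLast?_eq_none_iff.1 hs)
    obtain ⟨b, hb⟩ := Option.ne_none_iff_exists'.1 (mt List.head?_eq_none_iff.1 ht)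
    have hau : u.getLast? = some a := by
      obtain ⟨u', rfl⟩ := hsu
      simp [ha]
    have hbv : v.head? = some b := by
      obtain ⟨v', rfl⟩ := htv
      simp [hb]
    exact (h a hau b hbv).2 <| isLeft_eq_of_mem_relators hz
      (List.mem_append_left t (List.mem_of_getLast? ha))
      (List.mem_append_right s (List.mem_of_head? hb))

theorem lsrc_eq_of_isWord_append_singleton {a b : A ⊕ A} (hw : w ≠ [])
    (ha : IsWord src tgt ρ (w ++ [a])) (hb : IsWord src tgt ρ (w ++ [b])) :
    lsrc src tgt a = lsrc src tgt b := by
  obtain ⟨c, hc⟩ := Option.ne_none_iff_exists'.1 (mt List.getLast?_eq_none_iff.1 hw)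
  have hca := (List.isChain_append.1 (isWord_iff.1 ha).1).2.2 c hc a rfl
  have hcb := (List.isChain_append.1 (isWord_iff.1 hb).1).2.2 c hc b rfl
  exact hca.1.symm.trans hcb.1

end Words

section InitialRun

variable {V A : Type*} {src tgt : A → V} {ρ : Set (List A)} {u v w : List (A ⊕ A)} {c : Bool}

/-- The longest prefix of `w` consisting of letters of one colour, direct letters if `c = true` and
inverse letters if `c = false`. -/
def initialRun (c : Bool) (w : List (A ⊕ A)) : List (A ⊕ A) :=
  w.takeWhile (·.isLeft == c)

theorem initialRun_prefix (c : Bool) (w : List (A ⊕ A)) : initialRun c w <+: w :=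
  w.takeWhile_prefix _

theorem isLeft_eq_of_mem_initialRun {a : A ⊕ A} (ha : a ∈ initialRun c w) : a.isLeft = c := by
  simpa using List.mem_takeWhile_imp ha

theorem initialRun_append_of_exists (hu : ∃ l ∈ u, l.isLeft ≠ c) (v : List (A ⊕ A)) :
    initialRun c (u ++ v) = initialRun c u := by
  induction u with
  | nil => simp at hu
  | cons a u ih =>
    by_cases ha : a.isLeft = c <;> simp_all [initialRun]

theorem initialRun_append_of_forall (hu : ∀ l ∈ u, l.isLeft = c) (v : List (A ⊕ A)) :
    initialRun c (u ++ v) = u ++ initialRun c v :=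
  List.takeWhile_append_of_pos (by simpa using hu)

theorem exists_initialRun_append_eq (c : Bool) (w : List (A ⊕ A)) :
    ∃ t, initialRun c w ++ t = w ∧ ∀ b ∈ t.head?, b.isLeft ≠ c := by
  refine ⟨_, List.takeWhile_append_dropWhile, fun b hb ↦ ?_⟩
  simpa [Option.mem_def.1 hb] using w.head?_dropWhile_not (·.isLeft == c)

theorem IsWord.append_cons_of_initialRun {a : A ⊕ A} (h : IsWord src tgt ρ (a :: v))
    (hrun : IsWord src tgt ρ (u ++ a :: initialRun a.isLeft v)) :
    IsWord src tgt ρ (u ++ a :: v) := by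
  obtain ⟨t, ht, htail⟩ := exists_initialRun_append_eq a.isLeft v
  set r := initialRun a.isLeft v
  have hchain := (isWord_iff.1 h).1
  rw [← ht, ← List.cons_append] at h hchain ⊢
  rw [← List.append_assoc]
  refine hrun.append (h.infix List.infix_append_right) fun x hx b hb ↦ ?_
  replace hx : x ∈ (a :: r).getLast? := by simpa using hx
  refine ⟨(List.isChain_append.1 hchain).2.2 x hx b hb, fun hxb ↦ htail b hb ?_⟩
  rw [← hxb]
  rcases List.mem_cons.1 (List.mem_of_getLast? hx) with rfl | hxr
  exacts [rfl, isLeft_eq_of_mem_initialRun hxr]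

-- A relator cannot contain a middle part with letters of both colours.
theorem IsWord.append_append {m : List (A ⊕ A)} (hm : ∀ c, ∃ l ∈ m, l.isLeft ≠ c)
    (hum : IsWord src tgt ρ (u ++ m)) (hmv : IsWord src tgt ρ (m ++ v)) :
    IsWord src tgt ρ (u ++ (m ++ v)) := by
  obtain _ | ⟨a, m⟩ := m
  · simpa using hm true
  have hm' : ∃ l ∈ m, l.isLeft ≠ a.isLeft := by simpa using hm a.isLeft
  refine IsWord.append_cons_of_initialRun (v := m ++ v) hmv (hum.infix ?_)
  rw [initialRun_append_of_exists hm']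
  exact ((List.prefix_append_right_inj u).2 (List.cons_prefix_cons.2
    ⟨rfl, initialRun_prefix _ _⟩)).isInfix

end InitialRun

section CyclicWords

variable {V A : Type*} {src tgt : A → V} {ρ : Set (List A)} {u v w : List (A ⊕ A)} {a : A ⊕ A}

theorem isCyclicWord_iff : IsCyclicWord src tgt ρ w ↔
    (∀ c, ∃ l ∈ w, l.isLeft ≠ c) ∧ IsWord src tgt ρ (w ++ w) := by
  simp [IsCyclicWord, and_assoc]

theorem IsCyclicWord.isWord (h : IsCyclicWord src tgt ρ w) : IsWord src tgt ρ w :=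
  (isCyclicWord_iff.1 h).2.infix (List.prefix_append w w).isInfix

theorem IsCyclicWord.append_comm (h : IsCyclicWord src tgt ρ (u ++ v)) :
    IsCyclicWord src tgt ρ (v ++ u) := by
  rw [isCyclicWord_iff] at h ⊢
  obtain ⟨hcol, hw⟩ := h
  refine ⟨by simpa [or_comm] using hcol, ?_⟩
  have hleft : IsWord src tgt ρ (v ++ (u ++ v)) := hw.infix ⟨u, [], by simp⟩
  have hright : IsWord src tgt ρ (u ++ v ++ u) := hw.infix ⟨[], v, by simp⟩
  simpa using hleft.append_append hcol hright

theorem isCyclicWord_winv (h : IsCyclicWord src tgt ρ w) : IsCyclicWord src tgt ρ (winv w) := by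
  rw [isCyclicWord_iff] at h ⊢
  exact ⟨fun c ↦ by simpa using exists_mem_winv_isLeft_ne (h.1 !c),
    by simpa using isWord_winv h.2⟩

theorem IsCyclicWord.cons_winv_append_cons_winv (h : IsCyclicWord src tgt ρ (a :: u ++ a :: v)) :
    IsCyclicWord src tgt ρ (a.swap :: winv u ++ a.swap :: winv v) := by
  have hrot : IsCyclicWord src tgt ρ (v ++ a :: u ++ [a]) :=
    append_comm (u := [a]) (by simpa using h.append_comm)
  simpa using isCyclicWord_winv hrot

theorem IsCyclicWord.exists_isLeft_ne_or (h : IsCyclicWord src tgt ρ (a :: u ++ a :: v)) :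
    (∃ l ∈ u, l.isLeft ≠ a.isLeft) ∨ ∃ l ∈ v, l.isLeft ≠ a.isLeft := by
  obtain ⟨l, hl, hla⟩ := (isCyclicWord_iff.1 h).1 a.isLeft
  grind

theorem IsCyclicWord.left_of_initialRun_prefix (h : IsCyclicWord src tgt ρ (a :: u ++ a :: v))
    (hrun : initialRun a.isLeft (u ++ a :: v) <+: initialRun a.isLeft (v ++ a :: u)) :
    IsCyclicWord src tgt ρ (a :: u) := by
  have hw := (isCyclicWord_iff.1 h).2
  have hu : ∃ l ∈ u, l.isLeft ≠ a.isLeft := by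
    by_contra hu
    have hv := h.exists_isLeft_ne_or.resolve_left hu
    have hcons : initialRun a.isLeft (a :: v) = a :: initialRun a.isLeft v :=
      List.takeWhile_cons_of_pos (by simp)
    rw [initialRun_append_of_exists hv, initialRun_append_of_forall (by simpa using hu),
      hcons] at hrun
    have hle := hrun.length_le
    simp only [List.length_append, List.length_cons] at hle
    omega
  rw [initialRun_append_of_exists hu] at hrun
  obtain ⟨t, ht⟩ := hrun.trans (initialRun_prefix _ _)
  refine isCyclicWord_iff.2 ⟨fun c ↦ ?_, ?_⟩
  · obtain ⟨l, hl, hla⟩ := hu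
    by_cases hac : a.isLeft = c
    · exact ⟨l, List.mem_cons_of_mem _ hl, hac ▸ hla⟩
    · exact ⟨a, List.mem_cons_self, hac⟩
  · have hau : IsWord src tgt ρ (a :: u) := h.isWord.infix (List.prefix_append _ _).isInfix
    refine IsWord.append_cons_of_initialRun hau (hw.infix ⟨[], t ++ a :: v, ?_⟩)
    simpa using congrArg (a :: u ++ a :: · ++ a :: v) ht

theorem isCyclicWord_append_winv {p q : List (A ⊕ A)} {x y x' y' : A ⊕ A}
    (hp : IsWord src tgt ρ p) (hq : IsWord src tgt ρ q)
    (hpx : p.head? = some x) (hqy : q.head? = some y)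
    (hpx' : p.getLast? = some x'.swap) (hqy' : q.getLast? = some y'.swap)
    (hne : x ≠ y) (hne' : x' ≠ y')
    (hsrc : lsrc src tgt x = lsrc src tgt y) (hsrc' : lsrc src tgt x' = lsrc src tgt y')
    (hcol : x.isLeft = y.isLeft) (hcol' : x'.isLeft = y'.isLeft) :
    IsCyclicWord src tgt ρ (p ++ winv q) := by
  have hpq : IsWord src tgt ρ (p ++ winv q) :=
    hp.append (isWord_winv hq)
      (by simp [hpx', hqy', CanFollow, hsrc', hne', hcol', ← Sum.bnot_isLeft])
  refine isCyclicWord_iff.2 ⟨fun c ↦ ?_, hpq.append hpq ?_⟩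
  · by_cases hc : x.isLeft = c
    · exact ⟨y.swap, by simp [List.mem_of_head? hqy], by simp [← hcol, hc, ← Sum.bnot_isLeft]⟩
    · exact ⟨x, by simp [List.mem_of_head? hpx], hc⟩
  · simp [hpx, hqy, CanFollow, hsrc, hne.symm, hcol, ← Sum.bnot_isLeft]

end CyclicWords

section Divergence

variable {V A : Type*} {src tgt : A → V} {ρ : Set (List A)} {u v m n : List (A ⊕ A)}
  {a x y x' y' : A ⊕ A} {c : Bool}

/-- The initial runs of colour `c` in `u` and `v` agree on `m` and then continue with the different
letters `x` and `y`, respectively. -/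
def DivergeAt (c : Bool) (m : List (A ⊕ A)) (x y : A ⊕ A) (u v : List (A ⊕ A)) : Prop :=
  x ≠ y ∧ m ++ [x] <+: initialRun c u ∧ m ++ [y] <+: initialRun c v

theorem DivergeAt.symm (h : DivergeAt c m x y u v) : DivergeAt c m y x v u :=
  ⟨h.1.symm, h.2.2, h.2.1⟩

theorem DivergeAt.prefix_left (h : DivergeAt c m x y u v) : m ++ [x] <+: u :=
  h.2.1.trans (initialRun_prefix _ _)

theorem DivergeAt.prefix_right (h : DivergeAt c m x y u v) : m ++ [y] <+: v :=
  h.symm.prefix_left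

theorem DivergeAt.isLeft_left (h : DivergeAt c m x y u v) : x.isLeft = c :=
  isLeft_eq_of_mem_initialRun (h.2.1.subset (by simp))

theorem DivergeAt.isLeft_eq (h : DivergeAt c m x y u v) : x.isLeft = y.isLeft :=
  h.isLeft_left.trans h.symm.isLeft_left.symm

theorem DivergeAt.lsrc_eq (h : DivergeAt c m x y u v) (hu : IsWord src tgt ρ (a :: u))
    (hv : IsWord src tgt ρ (a :: v)) : lsrc src tgt x = lsrc src tgt y :=
  lsrc_eq_of_isWord_append_singleton (w := a :: m) (by simp)
    (hu.infix (List.cons_prefix_cons.2 ⟨rfl, h.prefix_left⟩).isInfix)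
    (hv.infix (List.cons_prefix_cons.2 ⟨rfl, h.prefix_right⟩).isInfix)

theorem IsCyclicWord.exists_length_lt_or_divergeAt (h : IsCyclicWord src tgt ρ (a :: u ++ a :: v)) :
    (∃ w, IsCyclicWord src tgt ρ w ∧ w.length < (a :: u ++ a :: v).length) ∨
      ∃ m x y, DivergeAt a.isLeft m x y (u ++ a :: v) (v ++ a :: u) := by
  rcases prefix_or_prefix_or_exists_ne (initialRun a.isLeft (u ++ a :: v))
    (initialRun a.isLeft (v ++ a :: u)) with huv | hvu | hdiv
  · exact .inl ⟨a :: u, h.left_of_initialRun_prefix huv, by simp⟩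
  · exact .inl ⟨a :: v, h.append_comm.left_of_initialRun_prefix hvu, by simp⟩
  · exact .inr hdiv

theorem exists_infix_between (hm : m ++ [y] <+: initialRun c v)
    (hn : n ++ [y'] <+: initialRun (!c) (winv v))
    (hv : ∃ l ∈ v, l.isLeft ≠ c) :
    ∃ q, q <:+: v ∧ q.head? = some y ∧ q.getLast? = some y'.swap := by
  obtain ⟨v', hv'⟩ := hm.trans (initialRun_prefix _ _)
  have hmy : ∀ l ∈ m ++ [y], l.isLeft = c := fun l hl ↦ isLeft_eq_of_mem_initialRun (hm.subset hl)
  have hex : ∃ l ∈ v', l.isLeft ≠ c := by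
    obtain ⟨l, hl, hlc⟩ := hv
    exact ⟨l, (List.mem_append.1 (hv' ▸ hl)).resolve_left fun hlm ↦ hlc (hmy l hlm), hlc⟩
  rw [← hv', winv_append, initialRun_append_of_exists (exists_mem_winv_isLeft_ne hex)] at hn
  have hy' : y'.swap ∈ v' := mem_winv.1 ((hn.trans (initialRun_prefix _ _)).subset (by simp))
  obtain ⟨q, hq, hqy, hqy'⟩ := exists_prefix_head?_getLast? (List.mem_cons_of_mem y hy')
  exact ⟨q, hq.isInfix.trans ⟨m, [], by simp [← hv']⟩, hqy, hqy'⟩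

theorem exists_infix_across (hm : m <+: v) (hn : n <+: winv v)
    (hx : m ++ [x] <+: u ++ a :: v) (hx' : n ++ [x'] <+: winv u ++ a.swap :: winv v) :
    ∃ p, p <:+: u ++ a :: v ∧ p.length ≤ u.length + 1 ∧
      p.head? = some x ∧ p.getLast? = some x'.swap := by
  obtain ⟨r, rfl⟩ := hm
  obtain ⟨r', hr'⟩ := hn
  rw [← hr'] at hx'
  obtain ⟨s, hs, hperm⟩ := exists_perm_cons_of_prefix_append (z := u ++ [a]) (by simp)
    (by simpa using hx)
  obtain ⟨s', -, hperm'⟩ := exists_perm_cons_of_prefix_append (z := winv u ++ [a.swap])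
    (by simp) (by simpa using hx')
  have hmem : x'.swap ∈ x :: s := by
    have : x' ∈ winv u ++ [a.swap] := hperm'.mem_iff.2 List.mem_cons_self
    refine hperm.mem_iff.1 ?_
    rcases List.mem_append.1 this with hxu | hxa
    · exact List.mem_append_left _ (mem_winv.1 hxu)
    · simp [List.mem_singleton.1 hxa]
  obtain ⟨p, hp, hpx, hpx'⟩ := exists_prefix_head?_getLast? hmem
  refine ⟨p, hp.isInfix.trans ⟨m, r, ?_⟩, ?_, hpx, hpx'⟩
  · simp [← hs]
  · simpa [← hperm.length_eq] using hp.length_le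

theorem IsCyclicWord.exists_length_lt_of_divergeAt (h : IsCyclicWord src tgt ρ (a :: u ++ a :: v))
    (hv : ∃ l ∈ v, l.isLeft ≠ a.isLeft)
    (hdiv : DivergeAt a.isLeft m x y (u ++ a :: v) (v ++ a :: u))
    (hdiv' : DivergeAt a.swap.isLeft n x' y' (winv u ++ a.swap :: winv v)
      (winv v ++ a.swap :: winv u)) :
    ∃ w, IsCyclicWord src tgt ρ w ∧ w.length < (a :: u ++ a :: v).length := by
  have hinv := h.cons_winv_append_cons_winv
  have hm : m ++ [y] <+: initialRun a.isLeft v := initialRun_append_of_exists hv _ ▸ hdiv.2.2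
  have hn : n ++ [y'] <+: initialRun (!a.isLeft) (winv v) := by
    rw [← initialRun_append_of_exists (exists_mem_winv_isLeft_ne hv) (a.swap :: winv u)]
    simpa using hdiv'.2.2
  obtain ⟨q, hqv, hqy, hqy'⟩ := exists_infix_between hm hn hv
  obtain ⟨p, hpuv, hplen, hpx, hpx'⟩ := exists_infix_across
    ((List.prefix_append m [y]).trans (hm.trans (initialRun_prefix _ _)))
    ((List.prefix_append n [y']).trans (hn.trans (initialRun_prefix _ _)))
    hdiv.prefix_left hdiv'.prefix_left
  refine ⟨p ++ winv q, isCyclicWord_append_winv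
    (h.isWord.infix (hpuv.trans (List.suffix_cons _ _).isInfix))
    (h.isWord.infix (hqv.trans ⟨a :: u ++ [a], [], by simp⟩)) hpx hqy hpx' hqy' hdiv.1 hdiv'.1
    (hdiv.lsrc_eq h.isWord h.append_comm.isWord)
    (hdiv'.lsrc_eq hinv.isWord hinv.append_comm.isWord) hdiv.isLeft_eq hdiv'.isLeft_eq, ?_⟩
  have := hqv.length_le
  simp only [List.length_append, length_winv, List.length_cons]
  omega

theorem IsCyclicWord.exists_length_lt (h : IsCyclicWord src tgt ρ (a :: u ++ a :: v)) :
    ∃ w, IsCyclicWord src tgt ρ w ∧ w.length < (a :: u ++ a :: v).length := by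
  rcases h.exists_length_lt_or_divergeAt with hlt | ⟨m, x, y, hdiv⟩
  · exact hlt
  rcases h.cons_winv_append_cons_winv.exists_length_lt_or_divergeAt with hlt | ⟨n, x', y', hdiv'⟩
  · simpa using hlt
  rcases h.exists_isLeft_ne_or with hu | hv
  · simpa [add_comm, add_left_comm] using
      h.append_comm.exists_length_lt_of_divergeAt hu hdiv.symm hdiv'.symm
  · exact h.exists_length_lt_of_divergeAt hv hdiv hdiv'

end Divergence

theorem minimal_cyclic_word_bound_general {V A : Type*} (src tgt : A → V) (ρ : Set (List A))
    (w : List (A ⊕ A)) (hw : IsCyclicWord src tgt ρ w)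
    (hmin : ∀ w' : List (A ⊕ A), IsCyclicWord src tgt ρ w' → w.length ≤ w'.length) :
    w.Nodup := by
  by_contra hdup
  obtain ⟨a, r, s, t, rfl⟩ := exists_append_cons_append_cons_of_not_nodup hdup
  have hrot : IsCyclicWord src tgt ρ (a :: s ++ a :: (t ++ r)) := by
    simpa using IsCyclicWord.append_comm (u := r) (v := a :: s ++ a :: t) (by simpa using hw)
  obtain ⟨w', hw', hlt⟩ := hrot.exists_length_lt
  have hle := hmin w' hw'
  simp only [List.length_append, List.length_cons] at hlt hle
  omega

/-- If `w` is a cyclic word of minimal length, then every arrow occurs at most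
once as a direct letter of `w` and at most once as an inverse letter of `w`;
in particular the length of `w` is at most `2a` where `a` is the number of
arrows. -/
theorem minimal_cyclic_word_bound {V A : Type*} [DecidableEq A] [Fintype A]
    (src tgt : A → V) (ρ : Set (List A))
    (hρ : ∀ p ∈ ρ, 2 ≤ p.length ∧ List.Chain' (fun a b => tgt a = src b) p)
    (w : List (A ⊕ A)) (hw : IsCyclicWord src tgt ρ w)
    (hmin : ∀ w' : List (A ⊕ A), IsCyclicWord src tgt ρ w' →
      w.length ≤ w'.length) :
    (∀ a : A, w.count (Sum.inl a) ≤ 1 ∧ w.count (Sum.inr a) ≤ 1) ∧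
    w.length ≤ 2 * Fintype.card A := by
  have h := minimal_cyclic_word_bound_general src tgt ρ w hw hmin
  exact ⟨fun a ↦ ⟨List.nodup_iff_count_le_one.1 h _, List.nodup_iff_count_le_one.1 h _⟩,
    by simpa [Fintype.card_sum, two_mul] using h.length_le_card⟩
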